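/- Let p > 1. For λ > 0 let u^λ be the unique minimizer of G_λ. If u^{λ̃}_i = u^{λ̃}_{i+1} for some λ̃ > 0 and some index i, then u^λ_i = u^λ_{i+1} for all λ ∈ (0, λ̃]. Consequently, for each i = 1,…,k-1 there exists λ_i ∈ (0,∞) such that u^λ_i = u^λ_{i+1} for λ ≤ λ_i and u^λ_i ≠ u^λ_{i+1} for λ > λ_i. -/

import Mathlib

/-!
Write `h_l` for the derivative of the fidelity term at site `l` and, for a minimizer `u` of the
energy with parameter `λ`, let the flux through the edge `(n - 1, n)` be
`H n = ∑ l < n, h_l (u l)`. Shifting the sites `0, …, n - 1` by a constant changes the total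
variation across that edge only, so minimality gives `|H n| ≤ λ⁻¹`, with `H n = λ⁻¹` at an upward
jump, `H n = -λ⁻¹` at a downward jump, and zero flux at the two ends (`isFlux_of_minimizer`).

The first claim is a comparison principle for such fluxes. Let `λ ≤ μ` with minimizers `u`, `w`,
and suppose `u i < u (i + 1)`. If `u i < w i`, then strict monotonicity of the `h_l` makes the flux
deficit `λ⁻¹ - H` of `u` smaller than the deficit `μ⁻¹ - H` of `w` on the edge left of `i`. Hence
`u` does not step down and `w` does not step up there, so `u < w` also at `i - 1`, and so on down
to the boundary, where the deficits are `λ⁻¹ ≥ μ⁻¹`: a contradiction. So `w i ≤ u i`, and likewise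
`u (i + 1) ≤ w (i + 1)` (`IsFlux.left_le`, `IsFlux.le_right`): jumps persist, and do not shrink,
when the parameter grows (`jump_up_persists`, `eq_of_eq`).

The threshold is the supremum of the set of parameters for which the two neighbours coincide. The
set is nonempty because fluxes of minimizers are bounded uniformly in `λ` while a jump requires
flux `±λ⁻¹`; it is bounded above because comparison with `f` forces `u` towards `f` as `λ → ∞`; and
it contains its supremum because minimizers for increasing parameters accumulate at a minimizer for
the limit parameter.
-/

/-- Predecessor index: `i - 1` (and `0` maps to `0`). -/
def pred {k : ℕ} (i : Fin k) : Fin k :=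
  ⟨i.val - 1, Nat.lt_of_le_of_lt (Nat.sub_le _ _) i.isLt⟩

/-- The discrete energy `G(v) = ∑_{i≥2} |v_i - v_{i-1}| + λ ∑_i L_i |f_i - v_i|^p`
(indices written with `Fin k`, i.e. `0,…,k-1`). -/
noncomputable def G (k : ℕ) (lam p : ℝ) (L f : Fin k → ℝ) (v : Fin k → ℝ) : ℝ :=
  (∑ i : Fin k, if i.val = 0 then 0 else |v i - v (pred i)|) +
    lam * ∑ i : Fin k, L i * |f i - v i| ^ p


/-! ### The derivative of `|r| ^ p` -/

/-- `r ↦ p * |r| ^ (p - 2) * r`, the derivative of `r ↦ |r| ^ p`. -/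
noncomputable def dpow (p r : ℝ) : ℝ := p * |r| ^ (p - 2) * r

lemma abs_rpow_sub_two_mul {p : ℝ} (hp : 1 < p) {y : ℝ} (hy : 0 ≤ y) :
    y ^ (p - 2) * y = y ^ (p - 1) := by
  rcases hy.eq_or_lt with rfl | hy
  · rw [mul_zero, Real.zero_rpow (by linarith)]
  · rw [← Real.rpow_add_one hy.ne']
    congr 1
    ring

lemma dpow_strictMono {p : ℝ} (hp : 1 < p) : StrictMono (dpow p) := by
  apply strictMono_of_odd_strictMonoOn_nonneg
  · intro x
    simp [dpow]
  · intro x hx y hy hxy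
    have hx : 0 ≤ x := hx
    have hy : 0 ≤ y := hy
    simp only [dpow, abs_of_nonneg hx, abs_of_nonneg hy, mul_assoc, abs_rpow_sub_two_mul hp hx,
      abs_rpow_sub_two_mul hp hy]
    exact mul_lt_mul_of_pos_left (Real.rpow_lt_rpow hx hxy (by linarith)) (by linarith)

lemma abs_dpow_le {p : ℝ} (hp : 1 < p) (x : ℝ) : |dpow p x| ≤ p * (1 + |x| ^ p) := by
  have h0 := abs_nonneg x
  have h1 : |dpow p x| = p * |x| ^ (p - 1) := by
    rw [dpow, abs_mul, abs_mul, abs_of_pos (by linarith : 0 < p),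
      abs_of_nonneg (Real.rpow_nonneg h0 _), mul_assoc, abs_rpow_sub_two_mul hp h0]
  rw [h1]
  apply mul_le_mul_of_nonneg_left _ (by linarith)
  rcases le_total |x| 1 with h | h
  · have := Real.rpow_le_one h0 h (by linarith : 0 ≤ p - 1)
    have := Real.rpow_nonneg h0 p
    linarith
  · have := Real.rpow_le_rpow_of_exponent_le h (by linarith : p - 1 ≤ p)
    linarith

lemma le_one_add_rpow {p : ℝ} (hp : 1 < p) {x : ℝ} (hx : 0 ≤ x) : x ≤ 1 + x ^ p := by
  rcases le_total x 1 with h | h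
  · have := Real.rpow_nonneg hx p
    linarith
  · have := Real.self_le_rpow_of_one_le h hp.le
    linarith

/-! ### Comparison of fluxes -/

/-- Euler–Lagrange system of the energy in dual form: `H n` is the discrete flux through the edge
joining sites `n - 1` and `n`, with `H 0 = H k = 0` at the two ends, increments
`H (n + 1) - H n = h n (x n)`, and `H / s` lying in the subdifferential of the absolute value at
the jump of `x` across that edge. For the energy with parameter `λ`, the bound `s` is `λ⁻¹`. -/
structure IsFlux (k : ℕ) (h : ℕ → ℝ → ℝ) (s : ℝ) (x H : ℕ → ℝ) : Prop where
  zero : H 0 = 0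
  last : H k = 0
  succ : ∀ n < k, H (n + 1) = H n + h n (x n)
  bound : ∀ n ≤ k, |H n| ≤ s
  up : ∀ n, n + 1 < k → x n < x (n + 1) → H (n + 1) = s
  down : ∀ n, n + 1 < k → x (n + 1) < x n → H (n + 1) = -s

section Comparison

variable {k : ℕ} {h : ℕ → ℝ → ℝ} {s t : ℝ} {x y Hx Hy : ℕ → ℝ}

/-- If the flux deficit `s - Hx` is smaller than `t - Hy` across an edge, then `x` cannot step down
there and `y` cannot step up: the extremal values of the fluxes would contradict `t ≤ s`. -/
lemma IsFlux.no_cross (hx : IsFlux k h s x Hx) (hy : IsFlux k h t y Hy) (hts : t ≤ s) {n : ℕ}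
    (hn : n + 1 < k) (hlt : Hy (n + 1) - t < Hx (n + 1) - s) :
    x n ≤ x (n + 1) ∧ y (n + 1) ≤ y n := by
  have hbx := abs_le.1 (hx.bound (n + 1) hn.le)
  have hby := abs_le.1 (hy.bound (n + 1) hn.le)
  constructor
  · by_contra! hc
    have := hx.down n hn hc
    linarith
  · by_contra! hc
    have := hy.up n hn hc
    linarith

/-- Below an upward jump of `x`, the solution `y` with the smaller flux bound is no larger. -/
lemma IsFlux.left_le (hh : ∀ n, StrictMono (h n)) (hx : IsFlux k h s x Hx) (hy : IsFlux k h t y Hy)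
    (hts : t ≤ s) {i : ℕ} (hi : i + 1 < k) (hjump : x i < x (i + 1)) : y i ≤ x i := by
  by_contra! hc
  -- Going left from site `i`, the strict inequality `x < y` propagates up to the boundary.
  have key : ∀ m n, n + m = i → x n < y n ∧ Hy n - t < Hx n - s := by
    intro m
    induction m with
    | zero =>
      intro n hn
      obtain rfl : n = i := hn
      have h1 := hx.up n hi hjump
      have h2 := (abs_le.1 (hy.bound (n + 1) hi.le)).2
      have h3 := hx.succ n (by omega)
      have h4 := hy.succ n (by omega)
      have h5 := hh n hc
      exact ⟨hc, by linarith⟩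
    | succ m ih =>
      intro n hn
      obtain ⟨h1, h2⟩ := ih (n + 1) (by omega)
      obtain ⟨h3, h4⟩ := hx.no_cross hy hts (by omega) h2
      have h5 : x n < y n := by linarith
      have h6 := hx.succ n (by omega)
      have h7 := hy.succ n (by omega)
      have h8 := hh n h5
      exact ⟨h5, by linarith⟩
  have := (key i 0 (by omega)).2
  rw [hx.zero, hy.zero] at this
  linarith

/-- Above an upward jump of `x`, the solution `y` with the smaller flux bound is no smaller. -/
lemma IsFlux.le_right (hh : ∀ n, StrictMono (h n)) (hx : IsFlux k h s x Hx) (hy : IsFlux k h t y Hy)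
    (hts : t ≤ s) {i : ℕ} (hi : i + 1 < k) (hjump : x i < x (i + 1)) : x (i + 1) ≤ y (i + 1) := by
  by_contra! hc
  -- Going right from site `i + 1`, the strict inequality `y < x` propagates up to the boundary.
  have key : ∀ n, i + 1 ≤ n → n < k → y n < x n ∧ Hy (n + 1) - t < Hx (n + 1) - s := by
    intro n hn
    induction n, hn using Nat.le_induction with
    | base =>
      intro _
      have h1 := hx.up i hi hjump
      have h2 := (abs_le.1 (hy.bound (i + 1) hi.le)).2
      have h3 := hx.succ (i + 1) hi
      have h4 := hy.succ (i + 1) hi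
      have h5 := hh (i + 1) hc
      exact ⟨hc, by linarith⟩
    | succ n hn ih =>
      intro hnk
      obtain ⟨h1, h2⟩ := ih (by omega)
      obtain ⟨h3, h4⟩ := hx.no_cross hy hts hnk h2
      have h5 : y (n + 1) < x (n + 1) := by linarith
      have h6 := hx.succ (n + 1) hnk
      have h7 := hy.succ (n + 1) hnk
      have h8 := hh (n + 1) h5
      exact ⟨h5, by linarith⟩
  have := (key (k - 1) (by omega) (by omega)).2
  rw [show k - 1 + 1 = k by omega, hx.last, hy.last] at this
  linarith

end Comparison

/-! ### Minimizers carry a flux -/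

/-- One-sided first-order condition: if `g` can decrease to the right of `0` at most at rate `c`,
then `g' (0) ≥ -c`. -/
lemma neg_le_deriv_of_eventually {g : ℝ → ℝ} {d c : ℝ} (hg : HasDerivAt g d 0)
    (h : ∀ᶠ t in nhdsWithin (0 : ℝ) (Set.Ioi 0), g 0 ≤ g t + c * t) : -c ≤ d := by
  refine ge_of_tendsto hg.tendsto_slope_zero_right ?_
  filter_upwards [h, self_mem_nhdsWithin] with t ht ht0
  have ht0 : 0 < t := ht0
  rw [smul_eq_mul, zero_add, inv_mul_eq_div, le_div_iff₀ ht0]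
  linarith

/-- The mirror image of `neg_le_deriv_of_eventually`. -/
lemma deriv_le_of_eventually {g : ℝ → ℝ} {d c : ℝ} (hg : HasDerivAt g d 0)
    (h : ∀ᶠ t in nhdsWithin (0 : ℝ) (Set.Ioi 0), g 0 ≤ g (-t) + c * t) : d ≤ c := by
  have hg' : HasDerivAt (fun t => g (-t)) (-d) 0 := by
    have := HasDerivAt.scomp (h := fun t : ℝ => -t) (x := (0 : ℝ)) (g₁ := g) (g₁' := d) (h' := -1)
      (by simpa using hg) (hasDerivAt_neg 0)
    rw [show -d = (-1 : ℝ) • d by simp]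
    exact this
  have := neg_le_deriv_of_eventually (c := c) hg' (by simpa using h)
  linarith

/-- Extension of a finite sequence to `ℕ` by zero. -/
noncomputable def ext0 {k : ℕ} (v : Fin k → ℝ) (n : ℕ) : ℝ := if h : n < k then v ⟨n, h⟩ else 0

lemma ext0_of_lt {k : ℕ} (v : Fin k → ℝ) {n : ℕ} (h : n < k) : ext0 v n = v ⟨n, h⟩ := by
  simp [ext0, h]

/-- Derivative at `x` of the `n`-th fidelity term `L n * |f n - x| ^ p`. Outside of the index range
the weight `1` is used, which keeps the function strictly increasing. -/
noncomputable def fid {k : ℕ} (p : ℝ) (L f : Fin k → ℝ) (n : ℕ) (x : ℝ) : ℝ :=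
  if h : n < k then L ⟨n, h⟩ * dpow p (x - f ⟨n, h⟩) else x

/-- Partial sum over the sites `0, …, n - 1` of the derivatives of the fidelity terms. -/
noncomputable def flux {k : ℕ} (p : ℝ) (L f v : Fin k → ℝ) (n : ℕ) : ℝ :=
  ∑ l : Fin k, if l.val < n then L l * dpow p (v l - f l) else 0

/-- The perturbation of `v` obtained by shifting the sites `0, …, n - 1` by `t`. -/
noncomputable def shift {k : ℕ} (v : Fin k → ℝ) (n : ℕ) (t : ℝ) (l : Fin k) : ℝ :=
  v l + if l.val < n then t else 0

section Energy

variable {k : ℕ} {p lam : ℝ} {L f v : Fin k → ℝ}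

lemma fid_strictMono (hp : 1 < p) (hL : ∀ i, 0 < L i) (n : ℕ) : StrictMono (fid p L f n) := by
  intro x y hxy
  unfold fid
  split_ifs with h
  · exact mul_lt_mul_of_pos_left (dpow_strictMono hp (by linarith)) (hL _)
  · exact hxy

/-- Shifting the sites `0, …, n` changes the total variation only across the edge `(n, n + 1)`. -/
lemma tv_shift (v : Fin k → ℝ) {n : ℕ} (hn : n + 1 < k) (t : ℝ) :
    (∑ i : Fin k, if i.val = 0 then 0 else |shift v (n + 1) t i - shift v (n + 1) t (pred i)|) =
    (∑ i : Fin k, if i.val = 0 then 0 else |v i - v (pred i)|) +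
      (|ext0 v (n + 1) - ext0 v n - t| - |ext0 v (n + 1) - ext0 v n|) := by
  rw [← sub_eq_iff_eq_add', ← Finset.sum_sub_distrib, Finset.sum_eq_single ⟨n + 1, hn⟩]
  · have : pred (⟨n + 1, hn⟩ : Fin k) = ⟨n, by omega⟩ := rfl
    simp only [this, shift, ext0_of_lt v hn, ext0_of_lt v (show n < k by omega)]
    simp
    ring_nf
  · intro b _ hb
    have hb' : b.val ≠ n + 1 := fun h => hb (Fin.ext h)
    by_cases h0 : b.val = 0
    · simp [h0]
    · have : (pred b).val = b.val - 1 := rfl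
      by_cases hlt : b.val < n + 1
      · have h2 : (pred b).val < n + 1 := by omega
        simp [h0, shift, hlt, h2]
      · have h2 : ¬ (pred b).val < n + 1 := by omega
        simp only [h0, shift, hlt, h2]
        simp
  · simp

lemma tv_shift_last (v : Fin k → ℝ) (t : ℝ) :
    (∑ i : Fin k, if i.val = 0 then 0 else |shift v k t i - shift v k t (pred i)|) =
    (∑ i : Fin k, if i.val = 0 then 0 else |v i - v (pred i)|) := by
  simp [shift]

/-- The fidelity term along a shift of the sites `0, …, n - 1` has derivative `flux` at `0`. -/
lemma hasDerivAt_fidelity (hp : 1 < p) (L f v : Fin k → ℝ) (n : ℕ) :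
    HasDerivAt (fun t => ∑ l : Fin k, L l * |f l - shift v n t l| ^ p) (flux p L f v n) 0 := by
  unfold flux
  apply HasDerivAt.fun_sum
  intro l _
  by_cases hl : l.val < n
  · simp only [shift, hl, if_true]
    apply HasDerivAt.const_mul
    have h1 : HasDerivAt (fun t : ℝ => v l + t - f l) 1 0 :=
      ((hasDerivAt_id (0 : ℝ)).const_add (v l)).sub_const (f l)
    have h2 := hasDerivAt_abs_rpow (v l + 0 - f l) hp
    have h3 := HasDerivAt.comp (0 : ℝ) h2 h1
    simp only [add_zero, mul_one] at h3
    refine h3.congr_of_eventuallyEq (Filter.Eventually.of_forall fun t => ?_)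
    simp [abs_sub_comm]
  · simp only [shift, hl, if_false]
    exact hasDerivAt_const _ _

/-- A minimizer of the energy carries a flux: perturbing by constant shifts of initial segments
yields the Euler–Lagrange conditions edge by edge. -/
lemma isFlux_of_minimizer (hp : 1 < p) (hlam : 0 < lam)
    (hv : ∀ w, G k lam p L f v ≤ G k lam p L f w) :
    IsFlux k (fid p L f) lam⁻¹ (ext0 v) (flux p L f v) := by
  have hinv : lam * lam⁻¹ = 1 := mul_inv_cancel₀ hlam.ne'
  have hsh0 : ∀ n, shift v n 0 = v := fun n => by ext l; simp [shift]
  have hder : ∀ n, HasDerivAt (fun t => lam * ∑ l : Fin k, L l * |f l - shift v n t l| ^ p)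
      (lam * flux p L f v n) 0 := fun n => (hasDerivAt_fidelity hp L f v n).const_mul lam
  have hmin : ∀ n, n + 1 < k → ∀ t,
      (fun t => lam * ∑ l : Fin k, L l * |f l - shift v (n + 1) t l| ^ p) 0 ≤
      (fun t => lam * ∑ l : Fin k, L l * |f l - shift v (n + 1) t l| ^ p) t +
      (|ext0 v (n + 1) - ext0 v n - t| - |ext0 v (n + 1) - ext0 v n|) := by
    intro n hn t
    have := hv (shift v (n + 1) t)
    unfold G at this
    rw [tv_shift v hn t] at this
    simp only [hsh0]
    linarith
  have hlast : flux p L f v k = 0 := by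
    have hm : ∀ t, (fun t => lam * ∑ l : Fin k, L l * |f l - shift v k t l| ^ p) 0 ≤
        (fun t => lam * ∑ l : Fin k, L l * |f l - shift v k t l| ^ p) t := by
      intro t
      have := hv (shift v k t)
      unfold G at this
      rw [tv_shift_last v t] at this
      simp only [hsh0]
      linarith
    have h1 := IsLocalMin.hasDerivAt_eq_zero (Filter.Eventually.of_forall hm) (hder k)
    exact (mul_eq_zero.1 h1).resolve_left hlam.ne'
  have hbd : ∀ n, n + 1 < k → |flux p L f v (n + 1)| ≤ lam⁻¹ := by
    intro n hn
    have h1 := neg_le_deriv_of_eventually (c := 1) (hder (n + 1)) (by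
      filter_upwards [self_mem_nhdsWithin] with t ht
      have ht : 0 < t := ht
      have h1 := hmin n hn t
      have h2 := abs_sub (ext0 v (n + 1) - ext0 v n) t
      rw [abs_of_pos ht] at h2
      linarith)
    have h2 := deriv_le_of_eventually (c := 1) (hder (n + 1)) (by
      filter_upwards [self_mem_nhdsWithin] with t ht
      have ht : 0 < t := ht
      have h1 := hmin n hn (-t)
      have h2 := abs_sub (ext0 v (n + 1) - ext0 v n) (-t)
      rw [abs_neg, abs_of_pos ht] at h2
      linarith)
    rw [abs_le]
    constructor <;> nlinarith
  have hzero : flux p L f v 0 = 0 := by simp [flux]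
  refine ⟨hzero, hlast, ?_, ?_, ?_, ?_⟩
  · intro n hn
    rw [← sub_eq_iff_eq_add', flux, flux, ← Finset.sum_sub_distrib,
      Finset.sum_eq_single ⟨n, hn⟩]
    · simp [fid, ext0, hn]
    · intro b _ hb
      have hb' : b.val ≠ n := fun h => hb (Fin.ext h)
      by_cases hlt : b.val < n
      · simp [hlt, show b.val < n + 1 by omega]
      · simp [hlt, show ¬ b.val < n + 1 by omega]
    · simp
  · intro n hn
    have hpos : 0 ≤ lam⁻¹ := (inv_pos.2 hlam).le
    rcases n with _ | n
    · simpa [hzero] using hpos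
    · rcases hn.eq_or_lt with rfl | hn
      · simpa [hlast] using hpos
      · exact hbd n hn
  · intro n hn hup
    refine le_antisymm (abs_le.1 (hbd n hn)).2 ?_
    have h1 := neg_le_deriv_of_eventually (c := -1) (hder (n + 1)) (by
      filter_upwards [Ioo_mem_nhdsGT (sub_pos.2 hup)] with t ht
      have h1 := hmin n hn t
      rw [abs_of_pos (sub_pos.2 hup), abs_of_pos (sub_pos.2 ht.2)] at h1
      linarith)
    nlinarith
  · intro n hn hdown
    refine le_antisymm ?_ (abs_le.1 (hbd n hn)).1
    have h1 := deriv_le_of_eventually (c := -1) (hder (n + 1)) (by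
      filter_upwards [Ioo_mem_nhdsGT (sub_pos.2 hdown)] with t ht
      have h1 := hmin n hn (-t)
      have h2 := ht.2
      rw [abs_of_neg (sub_neg.2 hdown), abs_of_neg (by linarith)] at h1
      linarith)
    nlinarith

/-! ### Persistence of jumps -/

lemma G_neg (w : Fin k → ℝ) : G k lam p L (-f) (-w) = G k lam p L f w := by
  unfold G
  simp only [Pi.neg_apply, neg_sub_neg]
  congr 1
  · refine Finset.sum_congr rfl fun i _ => ?_
    rw [abs_sub_comm]
  · refine congrArg (lam * ·) (Finset.sum_congr rfl fun i _ => ?_)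
    rw [abs_sub_comm]

/-- An upward jump of the minimizer for `lam` persists for every larger parameter `mu`. -/
lemma jump_up_persists (hp : 1 < p) (hL : ∀ i, 0 < L i) {mu : ℝ} (hlam : 0 < lam) (hle : lam ≤ mu)
    {w : Fin k → ℝ} (hv : ∀ z, G k lam p L f v ≤ G k lam p L f z)
    (hw : ∀ z, G k mu p L f w ≤ G k mu p L f z) {i : ℕ} (hi : i + 1 < k)
    (hjump : v ⟨i, Nat.lt_of_succ_lt hi⟩ < v ⟨i + 1, hi⟩) : w ⟨i, Nat.lt_of_succ_lt hi⟩ < w ⟨i + 1, hi⟩ := by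
  have hx := isFlux_of_minimizer hp hlam hv
  have hy := isFlux_of_minimizer hp (hlam.trans_le hle) hw
  have hts : mu⁻¹ ≤ lam⁻¹ := inv_anti₀ hlam hle
  have hj : ext0 v i < ext0 v (i + 1) := by
    rwa [ext0_of_lt v hi, ext0_of_lt v (show i < k by omega)]
  have h1 := hx.left_le (fid_strictMono hp hL) hy hts hi hj
  have h2 := hx.le_right (fid_strictMono hp hL) hy hts hi hj
  have h3 : ext0 w i < ext0 w (i + 1) := by linarith
  rwa [ext0_of_lt w hi, ext0_of_lt w (show i < k by omega)] at h3

/-- Equality of neighbours passes from minimizers for `mu` to minimizers for `lam ≤ mu`. The case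
`lam = mu` says that equality of neighbours does not depend on the choice of the minimizer. -/
lemma eq_of_eq (hp : 1 < p) (hL : ∀ i, 0 < L i) {mu : ℝ} (hlam : 0 < lam) (hle : lam ≤ mu)
    {w : Fin k → ℝ} (hv : ∀ z, G k lam p L f v ≤ G k lam p L f z)
    (hw : ∀ z, G k mu p L f w ≤ G k mu p L f z) {i : ℕ} (hi : i + 1 < k)
    (heq : w ⟨i, Nat.lt_of_succ_lt hi⟩ = w ⟨i + 1, hi⟩) : v ⟨i, Nat.lt_of_succ_lt hi⟩ = v ⟨i + 1, hi⟩ := by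
  rcases lt_trichotomy (v ⟨i, Nat.lt_of_succ_lt hi⟩) (v ⟨i + 1, hi⟩) with h | h | h
  · exact absurd heq (jump_up_persists hp hL hlam hle hv hw hi h).ne
  · exact h
  · -- A downward jump becomes an upward one after changing the sign of the data.
    have hv' : ∀ z, G k lam p L (-f) (-v) ≤ G k lam p L (-f) z := fun z => by
      rw [← neg_neg z, G_neg, G_neg]
      exact hv _
    have hw' : ∀ z, G k mu p L (-f) (-w) ≤ G k mu p L (-f) z := fun z => by
      rw [← neg_neg z, G_neg, G_neg]
      exact hw _
    have := jump_up_persists hp hL hlam hle hv' hw' hi (by simpa using h)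
    simp only [Pi.neg_apply, neg_lt_neg_iff] at this
    exact absurd heq this.ne'

/-! ### A priori bounds and continuity -/

lemma tv_nonneg (v : Fin k → ℝ) :
    0 ≤ ∑ i : Fin k, if i.val = 0 then 0 else |v i - v (pred i)| :=
  Finset.sum_nonneg fun i _ => by split_ifs <;> positivity

/-- Comparison with `0`: the fidelity of a minimizer is bounded independently of the parameter. -/
lemma fidelity_le (hlam : 0 < lam) (hv : ∀ z, G k lam p L f v ≤ G k lam p L f z) :
    ∑ l : Fin k, L l * |f l - v l| ^ p ≤ ∑ l : Fin k, L l * |f l| ^ p := by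
  have h := hv 0
  have h1 := tv_nonneg v
  unfold G at h
  simp only [Pi.zero_apply, sub_zero, abs_zero, ite_self, Finset.sum_const_zero, zero_add] at h
  exact le_of_mul_le_mul_left (by linarith) hlam

/-- Comparison with `f`: the fidelity of a minimizer is `O(1 / λ)` as `λ → ∞`. -/
lemma lam_mul_fidelity_le (hp : 1 < p) (hv : ∀ z, G k lam p L f v ≤ G k lam p L f z) :
    lam * ∑ l : Fin k, L l * |f l - v l| ^ p ≤
      ∑ i : Fin k, if i.val = 0 then 0 else |f i - f (pred i)| := by
  have h := hv f
  have h1 := tv_nonneg v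
  unfold G at h
  simp only [sub_self, abs_zero, Real.zero_rpow (by linarith : p ≠ 0), mul_zero,
    Finset.sum_const_zero, add_zero] at h
  linarith

lemma term_le_fidelity (hL : ∀ i, 0 < L i) (j : Fin k) :
    L j * |f j - v j| ^ p ≤ ∑ l : Fin k, L l * |f l - v l| ^ p :=
  Finset.single_le_sum (f := fun l => L l * |f l - v l| ^ p)
    (fun l _ => mul_nonneg (hL l).le (Real.rpow_nonneg (abs_nonneg _) _)) (Finset.mem_univ j)

lemma abs_flux_le (hp : 1 < p) (hL : ∀ i, 0 < L i) (n : ℕ) :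
    |flux p L f v n| ≤ p * ∑ l : Fin k, L l + p * ∑ l : Fin k, L l * |f l - v l| ^ p := by
  rw [Finset.mul_sum, Finset.mul_sum, ← Finset.sum_add_distrib]
  refine (Finset.abs_sum_le_sum_abs _ _).trans (Finset.sum_le_sum fun l _ => ?_)
  have h0 : 0 ≤ |f l - v l| ^ p := Real.rpow_nonneg (abs_nonneg _) _
  have h1 := abs_dpow_le hp (v l - f l)
  rw [abs_sub_comm (v l)] at h1
  have h2 := mul_le_mul_of_nonneg_left h1 (hL l).le
  split_ifs
  · rw [abs_mul, abs_of_pos (hL l)]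
    linarith
  · rw [abs_zero]
    have := hL l
    positivity

lemma continuous_G (hp : 1 < p) (L f : Fin k → ℝ) :
    Continuous fun q : ℝ × (Fin k → ℝ) => G k q.1 p L f q.2 := by
  unfold G
  refine Continuous.add (continuous_finsetSum _ fun i _ => ?_)
    (Continuous.mul continuous_fst (continuous_finsetSum _ fun i _ => ?_))
  · split_ifs <;> fun_prop
  · refine Continuous.mul continuous_const (Continuous.rpow_const (by fun_prop) fun _ => ?_)
    exact Or.inr (by linarith)

end Energy

/-! ### The threshold -/

/-- if two neighboring entries of the minimizer coincide for some `λ̃`,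
they coincide for all `λ ∈ (0, λ̃]`; consequently for each `i` there is a threshold
`λᵢ ∈ (0,∞)` below (and at) which they coincide and above which they differ. -/
theorem stmt17 (k : ℕ) (hk : 2 ≤ k) (p : ℝ) (hp : 1 < p)
    (L f : Fin k → ℝ) (hL : ∀ i, 0 < L i)
    (u : ℝ → Fin k → ℝ)
    (hu : ∀ lam : ℝ, 0 < lam →
      ∀ v : Fin k → ℝ, G k lam p L f (u lam) ≤ G k lam p L f v)
    (i : ℕ) (hik : i + 1 < k) :
    (∀ lt : ℝ, 0 < lt → u lt ⟨i, by omega⟩ = u lt ⟨i + 1, hik⟩ →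
      ∀ lam : ℝ, 0 < lam → lam ≤ lt →
        u lam ⟨i, by omega⟩ = u lam ⟨i + 1, hik⟩) ∧
    (f ⟨i, by omega⟩ ≠ f ⟨i + 1, hik⟩ →
      ∃ li : ℝ, 0 < li ∧ ∀ lam : ℝ, 0 < lam →
        ((lam ≤ li → u lam ⟨i, by omega⟩ = u lam ⟨i + 1, hik⟩) ∧
         (li < lam → u lam ⟨i, by omega⟩ ≠ u lam ⟨i + 1, hik⟩))) := by
  refine ⟨fun lt hlt heq lam hlam hle => eq_of_eq hp hL hlam hle (hu lam hlam) (hu lt hlt) hik heq,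
    fun hf => ?_⟩
  have hi : i < k := by omega
  set a : Fin k := ⟨i, hi⟩ with ha
  set b : Fin k := ⟨i + 1, hik⟩ with hb
  set S : Set ℝ := {lam | 0 < lam ∧ u lam a = u lam b} with hS
  set C : ℝ := ∑ l : Fin k, L l * |f l| ^ p with hC
  have hC0 : 0 ≤ C := Finset.sum_nonneg fun l _ =>
    mul_nonneg (hL l).le (Real.rpow_nonneg (abs_nonneg _) _)
  have hdown : ∀ lam mu, 0 < lam → lam ≤ mu → mu ∈ S → lam ∈ S := fun lam mu hlam hle hmu =>
    ⟨hlam, eq_of_eq hp hL hlam hle (hu lam hlam) (hu mu hmu.1) hik hmu.2⟩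
  -- A jump forces the flux to have modulus `λ⁻¹`, while fluxes of minimizers are bounded.
  have hne : ∃ lam, lam ∈ S := by
    set M : ℝ := p * ∑ l : Fin k, L l + p * C with hM
    have hM0 : 0 ≤ M := by
      have : 0 ≤ ∑ l : Fin k, L l := Finset.sum_nonneg fun l _ => (hL l).le
      have : 0 ≤ p := by linarith
      positivity
    have hpos : 0 < (M + 1)⁻¹ := by positivity
    refine ⟨(M + 1)⁻¹, hpos, ?_⟩
    have hfl := isFlux_of_minimizer hp hpos (hu _ hpos)
    rw [inv_inv] at hfl
    have hbd : |flux p L f (u (M + 1)⁻¹) (i + 1)| ≤ M :=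
      (abs_flux_le hp hL _).trans (by
        have h1 := fidelity_le hpos (hu _ hpos)
        have h2 := mul_le_mul_of_nonneg_left h1 (by linarith : 0 ≤ p)
        linarith)
    have hbd' := abs_le.1 hbd
    have e1 : ext0 (u (M + 1)⁻¹) i = u (M + 1)⁻¹ a := ext0_of_lt _ hi
    have e2 : ext0 (u (M + 1)⁻¹) (i + 1) = u (M + 1)⁻¹ b := ext0_of_lt _ hik
    rcases lt_trichotomy (u (M + 1)⁻¹ a) (u (M + 1)⁻¹ b) with h | h | h
    · have := hfl.up i hik (by rwa [e1, e2])
      linarith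
    · exact h
    · have := hfl.down i hik (by rwa [e1, e2])
      linarith
  -- A common value of `u` at both sites is at distance at least `|f a - f b| / 2` from `f a` or
  -- from `f b`, which is too costly for large parameters.
  have hbdd : BddAbove S := by
    set T : ℝ := ∑ i : Fin k, if i.val = 0 then 0 else |f i - f (pred i)| with hT
    set d : ℝ := |f a - f b| / 2 with hd
    have hd0 : 0 < d := by
      have := abs_pos.2 (sub_ne_zero.2 hf)
      positivity
    have hdp : 0 < d ^ p := Real.rpow_pos_of_pos hd0 p
    set m : ℝ := min (L a) (L b) * d ^ p with hm
    have hm0 : 0 < m := mul_pos (lt_min (hL a) (hL b)) hdp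
    refine ⟨T / m, ?_⟩
    rintro lam ⟨hlam, heq⟩
    rw [le_div_iff₀ hm0]
    refine le_trans (mul_le_mul_of_nonneg_left ?_ hlam.le) (lam_mul_fidelity_le hp (hu lam hlam))
    have htri : d ≤ |f a - u lam a| ∨ d ≤ |f b - u lam b| := by
      by_contra! hc
      have h1 := abs_sub_le (f a) (u lam a) (f b)
      rw [abs_sub_comm (u lam a), heq] at h1
      rw [heq] at hc
      linarith [hc.1, hc.2]
    rcases htri with h | h
    · refine le_trans ?_ (term_le_fidelity hL a)
      exact mul_le_mul (min_le_left _ _) (Real.rpow_le_rpow hd0.le h (by linarith)) hdp.le (hL a).le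
    · refine le_trans ?_ (term_le_fidelity hL b)
      exact mul_le_mul (min_le_right _ _) (Real.rpow_le_rpow hd0.le h (by linarith)) hdp.le
        (hL b).le
  have hpos : 0 < sSup S := by
    obtain ⟨lam, hlam⟩ := hne
    exact hlam.1.trans_le (le_csSup hbdd hlam)
  have hbelow : ∀ lam, 0 < lam → lam < sSup S → lam ∈ S := by
    intro lam hlam hlt
    obtain ⟨mu, hmu, h⟩ := exists_lt_of_lt_csSup hne hlt
    exact hdown lam mu hlam h.le hmu
  -- The supremum is attained: minimizers for parameters increasing to `sSup S` accumulate at a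
  -- minimizer for `sSup S`.
  have hmem : sSup S ∈ S := by
    obtain ⟨x, hxmono, hxmem, hxlim⟩ := exists_seq_strictMono_tendsto' hpos
    have hcpt : ∀ n, u (x n) ∈ Metric.closedBall f (1 + ∑ j : Fin k, C / L j) := by
      intro n
      have hnn : ∀ j : Fin k, 0 ≤ C / L j := fun j => div_nonneg hC0 (hL j).le
      rw [Metric.mem_closedBall, dist_pi_le_iff
        (add_nonneg zero_le_one (Finset.sum_nonneg fun j _ => hnn j))]
      intro j
      rw [Real.dist_eq, abs_sub_comm]
      have h1 := (term_le_fidelity (p := p) hL j).trans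
        (fidelity_le (hxmem n).1 (hu _ (hxmem n).1))
      have h2 : |f j - u (x n) j| ^ p ≤ C / L j := by
        rw [le_div_iff₀ (hL j), mul_comm]
        exact h1
      have h3 := Finset.single_le_sum (fun j _ => hnn j) (Finset.mem_univ j)
      have h4 := le_one_add_rpow hp (abs_nonneg (f j - u (x n) j))
      linarith
    obtain ⟨w, -, φ, hφ, hw⟩ := (isCompact_closedBall f _).tendsto_subseq hcpt
    have hxφ : Filter.Tendsto (x ∘ φ) Filter.atTop (nhds (sSup S)) :=
      hxlim.comp hφ.tendsto_atTop
    have hwmin : ∀ z, G k (sSup S) p L f w ≤ G k (sSup S) p L f z := by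
      intro z
      have hc := continuous_G hp L f
      have h1 := (hc.tendsto (sSup S, w)).comp (hxφ.prodMk_nhds hw)
      have h2 := (hc.tendsto (sSup S, z)).comp (hxφ.prodMk_nhds (tendsto_const_nhds (x := z)))
      exact le_of_tendsto_of_tendsto' h1 h2 fun n => hu _ (hxmem (φ n)).1 z
    have hwab : w a = w b := by
      have h1 := ((continuous_apply a).tendsto w).comp hw
      have h2 := ((continuous_apply b).tendsto w).comp hw
      refine tendsto_nhds_unique h1 (h2.congr fun n => ?_)
      exact (hbelow _ (hxmem (φ n)).1 (hxmem (φ n)).2).2.symm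
    exact ⟨hpos, eq_of_eq hp hL hpos le_rfl (hu _ hpos) hwmin hik hwab⟩
  refine ⟨sSup S, hpos, fun lam hlam => ⟨fun hle => (hdown lam _ hlam hle hmem).2, ?_⟩⟩
  intro hlt heq
  exact absurd (le_csSup hbdd (show lam ∈ S from ⟨hlam, heq⟩)) (not_le.2 hlt)
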